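/- Let 1 ≤ p < ∞ and -1 < α < ∞. The Hardy space H^p(𝔻) is a linear subspace of the weighted Bergman space A^p_α(𝔻), but H^p(𝔻) is not a closed subset of A^p_α(𝔻) with respect to the A^p_α norm. -/

import Mathlib

/-!
In polar coordinates the Bergman integral is `∫₀¹ r (1 - r²)^α · 2π M(r) dr`, where `M(r)` is the
Hardy mean of `|f|^p` over the circle of radius `r`. Hence any bound `M(r) ≤ C (1 - r)^{-ε}` with
`ε < α + 1` puts `f` in the Bergman space (`memBergman_of_mean_le`); the case `ε = 0` is the
inclusion of the Hardy space. Linearity follows from `|a + b|^p ≤ 2^p (|a|^p + |b|^p)`.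

For the failure of closedness, take `g(z) = (1 - z)^{-1/p}`, so that `|g|^p = 1 / |1 - z|`. Its
means grow like `log (1 / (1 - r))`: they are unbounded (`log_le_mean_poleRoot`), so `g` is not in
the Hardy space, but they are `O((1 - r)^{-ε})` for every `ε ∈ (0, 1)`
(`exists_mean_poleRoot_le`), so `g` is in the Bergman space. Moving the pole outside the closed disk
gives the bounded functions `(1 + 1/(n+1) - z)^{-1/p}`, which are dominated by `|g|` and converge
to `g` pointwise, hence in the Bergman norm by dominated convergence.
-/

open MeasureTheory Filter Set Topology Real

noncomputable section

/-- The open unit disk in the complex plane. -/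
def unitDisk : Set ℂ := Metric.ball 0 1

/-- The integrand `|f z|^p (1 - |z|^2)^α` appearing in the weighted Bergman norm. -/
def bergmanIntegrand (p α : ℝ) (f : ℂ → ℂ) (z : ℂ) : ℝ :=
  ‖f z‖ ^ p * (1 - ‖z‖ ^ 2) ^ α

/-- Membership in the weighted Bergman space `A^p_α(𝔻)`. -/
def MemBergman (p α : ℝ) (f : ℂ → ℂ) : Prop :=
  DifferentiableOn ℂ f unitDisk ∧
    IntegrableOn (bergmanIntegrand p α f) unitDisk volume

/-- The weighted Bergman norm `‖f‖_{A^p_α}`. -/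
def bergmanNorm (p α : ℝ) (f : ℂ → ℂ) : ℝ :=
  (((α + 1) / π) * ∫ z in unitDisk, bergmanIntegrand p α f z ∂volume) ^ (1 / p)

/-- The mean `(1/(2π)) ∫_0^{2π} |f(r e^{iθ})|^p dθ`. -/
def hardyIntegral (p : ℝ) (f : ℂ → ℂ) (r : ℝ) : ℝ :=
  (1 / (2 * π)) * ∫ θ in (0:ℝ)..(2 * π), ‖f ((r : ℂ) * Complex.exp (θ * Complex.I))‖ ^ p

/-- Membership in the Hardy space `H^p(𝔻)`. -/
def MemHardy (p : ℝ) (f : ℂ → ℂ) : Prop :=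
  DifferentiableOn ℂ f unitDisk ∧
    ∃ C : ℝ, ∀ r : ℝ, 0 ≤ r → r < 1 → hardyIntegral p f r ≤ C

/-- The Hardy norm `‖f‖_{H^p}`. -/
def hardyNorm (p : ℝ) (f : ℂ → ℂ) : ℝ :=
  ⨆ r : Set.Ico (0:ℝ) 1, (hardyIntegral p f ↑r) ^ (1 / p)

/-- `f` has the radial limit `L` at the boundary point `e^{iθ}`. -/
def HasRadialLimit (f : ℂ → ℂ) (θ : ℝ) (L : ℂ) : Prop :=
  Tendsto (fun r : ℝ => f ((r : ℂ) * Complex.exp (θ * Complex.I))) (𝓝[<] (1:ℝ)) (𝓝 L)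

/-- `φ` is an inner function: bounded analytic on the disk, with radial limits of
modulus one at almost every boundary point. -/
def IsInner (φ : ℂ → ℂ) : Prop :=
  DifferentiableOn ℂ φ unitDisk ∧ (∃ C : ℝ, ∀ z ∈ unitDisk, ‖φ z‖ ≤ C) ∧
    ∀ᵐ θ ∂(volume.restrict (Set.Ico (0:ℝ) (2 * π))),
      ∃ L : ℂ, ‖L‖ = 1 ∧ HasRadialLimit φ θ L

/-- `g` belongs to `φ · H^p(𝔻)` (as a space of analytic functions on the disk). -/
def MemMulHardy (p : ℝ) (φ g : ℂ → ℂ) : Prop :=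
  ∃ h : ℂ → ℂ, MemHardy p h ∧ Set.EqOn g (fun z => φ z * h z) unitDisk

/-- The lacunary series `f₀(z) = ∑_{k=1}^∞ z^{3^{k-1}}`. -/
def lacunary (z : ℂ) : ℂ := ∑' k : ℕ, z ^ (3 ^ k)


/-- The crude inequality `|a + b|^p ≤ 2^p (|a|^p + |b|^p)`, valid for every `p ≥ 0`. -/
lemma norm_add_rpow_le {p : ℝ} (hp : 0 ≤ p) (a b : ℂ) :
    ‖a + b‖ ^ p ≤ 2 ^ p * (‖a‖ ^ p + ‖b‖ ^ p) := by
  have ha : 0 ≤ ‖a‖ ^ p := by positivity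
  have hb : 0 ≤ ‖b‖ ^ p := by positivity
  calc ‖a + b‖ ^ p ≤ (2 * max ‖a‖ ‖b‖) ^ p := by
        refine Real.rpow_le_rpow (norm_nonneg _) ?_ hp
        linarith [norm_add_le a b, le_max_left ‖a‖ ‖b‖, le_max_right ‖a‖ ‖b‖]
    _ = 2 ^ p * max ‖a‖ ‖b‖ ^ p := Real.mul_rpow (by norm_num) (by positivity)
    _ ≤ _ := by
        gcongr
        rcases max_cases ‖a‖ ‖b‖ with h | h <;> rw [h.1] <;> linarith

/-! ### Circles and integral means -/

lemma norm_circle {r : ℝ} (hr : 0 ≤ r) (θ : ℝ) :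
    ‖(r : ℂ) * Complex.exp (θ * Complex.I)‖ = r := by
  rw [norm_mul, Complex.norm_exp_ofReal_mul_I, mul_one, Complex.norm_real, Real.norm_of_nonneg hr]

lemma circle_mem_unitDisk {r : ℝ} (hr : 0 ≤ r) (hr1 : r < 1) (θ : ℝ) :
    (r : ℂ) * Complex.exp (θ * Complex.I) ∈ unitDisk := by
  rw [unitDisk, mem_ball_zero_iff, norm_circle hr]
  exact hr1

lemma continuous_circle {p : ℝ} (hp : 0 ≤ p) {f : ℂ → ℂ} (hf : DifferentiableOn ℂ f unitDisk)
    {r : ℝ} (hr : 0 ≤ r) (hr1 : r < 1) :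
    Continuous fun θ : ℝ => ‖f ((r : ℂ) * Complex.exp (θ * Complex.I))‖ ^ p := by
  have h : Continuous fun θ : ℝ => f ((r : ℂ) * Complex.exp (θ * Complex.I)) :=
    hf.continuousOn.comp_continuous (by fun_prop) fun θ => circle_mem_unitDisk hr hr1 θ
  exact h.norm.rpow_const fun _ => Or.inr hp

lemma hardyIntegral_nonneg (p : ℝ) (f : ℂ → ℂ) (r : ℝ) : 0 ≤ hardyIntegral p f r := by
  refine mul_nonneg (by positivity) (intervalIntegral.integral_nonneg (by positivity) ?_)
  intro θ _
  positivity

/-- The mean over a circle may be computed with the angle running over `[-π, π]`, the range used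
by polar coordinates. -/
lemma two_pi_mul_hardyIntegral (p : ℝ) (f : ℂ → ℂ) (r : ℝ) :
    2 * π * hardyIntegral p f r
      = ∫ θ in (-π)..π, ‖f ((r : ℂ) * Complex.exp (θ * Complex.I))‖ ^ p := by
  have hper : Function.Periodic
      (fun θ : ℝ => ‖f ((r : ℂ) * Complex.exp (θ * Complex.I))‖ ^ p) (2 * π) := by
    intro θ
    have : Complex.exp (((θ + 2 * π : ℝ) : ℂ) * Complex.I) = Complex.exp (θ * Complex.I) := by
      push_cast
      rw [add_mul, Complex.exp_periodic]
    simp only [this]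
  have h := hper.intervalIntegral_add_eq 0 (-π)
  rw [zero_add, show -π + 2 * π = π by ring] at h
  rw [hardyIntegral, h, ← mul_assoc, mul_one_div_cancel (by positivity), one_mul]

lemma hardyIntegral_add_le {p : ℝ} (hp : 0 ≤ p) {f g : ℂ → ℂ}
    (hf : DifferentiableOn ℂ f unitDisk) (hg : DifferentiableOn ℂ g unitDisk)
    {r : ℝ} (hr : 0 ≤ r) (hr1 : r < 1) :
    hardyIntegral p (f + g) r ≤ 2 ^ p * (hardyIntegral p f r + hardyIntegral p g r) := by
  have hcf := continuous_circle hp hf hr hr1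
  have hcg := continuous_circle hp hg hr hr1
  have hfg := continuous_circle hp (hf.add hg) hr hr1
  unfold hardyIntegral
  rw [← mul_add, mul_left_comm, ← intervalIntegral.integral_add (hcf.intervalIntegrable _ _)
    (hcg.intervalIntegrable _ _), ← intervalIntegral.integral_const_mul (2 ^ p)]
  refine mul_le_mul_of_nonneg_left ?_ (show 0 ≤ 1 / (2 * π) by positivity)
  refine intervalIntegral.integral_mono (by positivity) (hfg.intervalIntegrable _ _)
    ((continuous_const.mul (hcf.add hcg)).intervalIntegrable _ _) fun θ => ?_
  exact norm_add_rpow_le hp _ _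

lemma hardyIntegral_smul {p : ℝ} (c : ℂ) (f : ℂ → ℂ) (r : ℝ) :
    hardyIntegral p (c • f) r = ‖c‖ ^ p * hardyIntegral p f r := by
  unfold hardyIntegral
  rw [mul_left_comm, ← intervalIntegral.integral_const_mul (‖c‖ ^ p)]
  congr 1
  refine intervalIntegral.integral_congr fun θ _ => ?_
  simp only [Pi.smul_apply, smul_eq_mul, norm_mul]
  exact Real.mul_rpow (norm_nonneg _) (norm_nonneg _)

/-! ### Integrability on the disk from growth of the means -/

lemma one_sub_sq_pos {z : ℂ} (hz : z ∈ unitDisk) : 0 < 1 - ‖z‖ ^ 2 := by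
  rw [unitDisk, mem_ball_zero_iff] at hz
  nlinarith [norm_nonneg z]

lemma measurableSet_unitDisk : MeasurableSet unitDisk := Metric.isOpen_ball.measurableSet

lemma continuousOn_bergmanIntegrand {p : ℝ} (hp : 0 ≤ p) (α : ℝ) {f : ℂ → ℂ}
    (hf : DifferentiableOn ℂ f unitDisk) : ContinuousOn (bergmanIntegrand p α f) unitDisk := by
  unfold bergmanIntegrand
  refine (hf.continuousOn.norm.rpow_const fun _ _ => Or.inr hp).mul ?_
  refine ContinuousOn.rpow_const (by fun_prop) fun z hz => Or.inl (one_sub_sq_pos hz).ne'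

lemma bergmanIntegrand_nonneg (p α : ℝ) (f : ℂ → ℂ) {z : ℂ} (hz : z ∈ unitDisk) :
    0 ≤ bergmanIntegrand p α f z := by
  have := one_sub_sq_pos hz
  unfold bergmanIntegrand
  positivity

/-- Since `1 - r² = (1 - r)(1 + r)` with `1 + r ∈ [1, 2]`, the weight is comparable
to `(1 - r)^α` for either sign of `α`. -/
lemma weight_le (α : ℝ) {r : ℝ} (hr : 0 ≤ r) (hr1 : r < 1) :
    (1 - r ^ 2) ^ α ≤ 2 ^ |α| * (1 - r) ^ α := by
  rw [show 1 - r ^ 2 = (1 + r) * (1 - r) by ring,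
    Real.mul_rpow (by linarith) (by linarith)]
  refine mul_le_mul_of_nonneg_right ?_ (Real.rpow_nonneg (by linarith) _)
  calc (1 + r) ^ α ≤ (1 + r) ^ |α| := Real.rpow_le_rpow_of_exponent_le (by linarith) (le_abs_self α)
    _ ≤ 2 ^ |α| := Real.rpow_le_rpow (by linarith) (by linarith) (abs_nonneg α)

lemma lintegral_one_sub_rpow_lt_top (K : ℝ) {β : ℝ} (hβ : -1 < β) :
    ∫⁻ r in Ioo (0 : ℝ) 1, ENNReal.ofReal (K * (1 - r) ^ β) < ⊤ := by
  have h := ((intervalIntegral.intervalIntegrable_rpow' (a := 0) (b := 1) hβ).comp_sub_left 1)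
  simp only [sub_zero, sub_self] at h
  have h2 : IntegrableOn (fun r : ℝ => K * (1 - r) ^ β) (Ioo 0 1) :=
    ((intervalIntegrable_iff_integrableOn_Ioo_of_le zero_le_one).1 h.symm).const_mul K
  exact h2.lintegral_lt_top

/-- Inner integral of the Bergman integrand in polar coordinates. -/
lemma lintegral_circle_le {p α : ℝ} (hp : 0 ≤ p) {f : ℂ → ℂ}
    (hf : DifferentiableOn ℂ f unitDisk) {C ε r : ℝ} (hr : 0 < r) (hr1 : r < 1)
    (h : hardyIntegral p f r ≤ C * (1 - r) ^ (-ε)) :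
    ∫⁻ θ in Ioo (-π) π, ENNReal.ofReal r *
        ENNReal.ofReal (bergmanIntegrand p α f ((r : ℂ) * Complex.exp (θ * Complex.I)))
      ≤ ENNReal.ofReal (2 ^ |α| * (2 * π) * C * (1 - r) ^ (α - ε)) := by
  have hc := continuous_circle hp hf hr.le hr1
  have h1 : 0 < 1 - r ^ 2 := by nlinarith
  have hw : 0 ≤ r * (1 - r ^ 2) ^ α := by positivity
  have hint : IntegrableOn (fun θ : ℝ => r * (1 - r ^ 2) ^ α *
      ‖f ((r : ℂ) * Complex.exp (θ * Complex.I))‖ ^ p) (Ioo (-π) π) :=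
    (intervalIntegrable_iff_integrableOn_Ioo_of_le (by linarith [Real.pi_pos])).1
      ((continuous_const.mul hc).intervalIntegrable _ _)
  calc _ = ∫⁻ θ in Ioo (-π) π, ENNReal.ofReal (r * (1 - r ^ 2) ^ α *
          ‖f ((r : ℂ) * Complex.exp (θ * Complex.I))‖ ^ p) := by
        refine lintegral_congr fun θ => ?_
        rw [← ENNReal.ofReal_mul hr.le, bergmanIntegrand, norm_circle hr.le]
        congr 1
        ring
    _ = ENNReal.ofReal (r * (1 - r ^ 2) ^ α * (2 * π * hardyIntegral p f r)) := by
        rw [← ofReal_integral_eq_lintegral_ofReal hint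
          (Eventually.of_forall fun θ => mul_nonneg hw (by positivity)),
          integral_const_mul, two_pi_mul_hardyIntegral,
          intervalIntegral.integral_of_le (by linarith [Real.pi_pos]), integral_Ioc_eq_integral_Ioo]
    _ ≤ _ := by
        refine ENNReal.ofReal_le_ofReal ?_
        have hr1' : 0 < 1 - r := by linarith
        have hH := hardyIntegral_nonneg p f r
        have hπ := Real.pi_pos
        calc r * (1 - r ^ 2) ^ α * (2 * π * hardyIntegral p f r)
            ≤ 1 * (2 ^ |α| * (1 - r) ^ α) * (2 * π * (C * (1 - r) ^ (-ε))) := by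
              gcongr
              exact weight_le α hr.le hr1
          _ = _ := by
              rw [sub_eq_add_neg α ε, Real.rpow_add hr1']
              ring

/-- Polar coordinates turn a growth bound `C (1 - r)^{-ε}`, `ε < α + 1`, for the integral means
into membership in the Bergman space. -/
lemma memBergman_of_mean_le {p α : ℝ} (hp : 0 ≤ p) {f : ℂ → ℂ}
    (hf : DifferentiableOn ℂ f unitDisk) {C ε : ℝ} (hε : -1 < α - ε)
    (h : ∀ r : ℝ, 0 < r → r < 1 → hardyIntegral p f r ≤ C * (1 - r) ^ (-ε)) :
    MemBergman p α f := by
  refine ⟨hf, (continuousOn_bergmanIntegrand hp α hf).aestronglyMeasurable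
    measurableSet_unitDisk, ?_⟩
  rw [hasFiniteIntegral_iff_ofReal ((ae_restrict_iff' measurableSet_unitDisk).2
    (Eventually.of_forall fun z hz => bergmanIntegrand_nonneg p α f hz)),
    ← lintegral_indicator measurableSet_unitDisk, ← Complex.lintegral_comp_polarCoord_symm]
  set G : ℂ → ENNReal :=
    unitDisk.indicator fun z => ENNReal.ofReal (bergmanIntegrand p α f z) with hG
  rw [polarCoord_target, Measure.volume_eq_prod, ← Measure.prod_restrict]
  refine (lintegral_prod_le _).trans_lt ?_
  set K := 2 ^ |α| * (2 * π) * C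
  refine lt_of_le_of_lt (b := ∫⁻ r in Ioi (0 : ℝ),
    (Ioo (0 : ℝ) 1).indicator (fun r => ENNReal.ofReal (K * (1 - r) ^ (α - ε))) r) ?_ ?_
  · refine setLIntegral_mono' measurableSet_Ioi fun r hr => ?_
    have hr0 : 0 < r := hr
    have hsymm : ∀ θ : ℝ, Complex.polarCoord.symm (r, θ)
        = (r : ℂ) * Complex.exp (θ * Complex.I) := by
      intro θ
      rw [Complex.polarCoord_symm_apply, Complex.exp_mul_I]
      push_cast
      rfl
    simp only [hsymm, smul_eq_mul]
    by_cases hr1 : r < 1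
    · rw [indicator_of_mem (show r ∈ Ioo (0 : ℝ) 1 from ⟨hr0, hr1⟩)]
      simp only [hG, indicator_of_mem (circle_mem_unitDisk hr0.le hr1 _)]
      exact lintegral_circle_le hp hf hr0 hr1 (h r hr0 hr1)
    · have hnot : ∀ θ : ℝ, (r : ℂ) * Complex.exp (θ * Complex.I) ∉ unitDisk := by
        intro θ
        rwa [unitDisk, mem_ball_zero_iff, norm_circle hr0.le]
      simp only [hG, indicator_of_notMem (hnot _), mul_zero, lintegral_zero, zero_le]
  · rw [lintegral_indicator measurableSet_Ioo, Measure.restrict_restrict measurableSet_Ioo,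
      inter_eq_left.2 fun r hr => hr.1]
    exact lintegral_one_sub_rpow_lt_top K hε

/-! ### The functions `(a - z)^{-1/p}` -/

/-- The analytic function `(a - z)^{-1/p}` (principal branch), for a real pole `a ≥ 1`. -/
def poleRoot (p a : ℝ) (z : ℂ) : ℂ := ((a : ℂ) - z) ^ ((-(1 / p) : ℝ) : ℂ)

lemma norm_poleRoot_rpow {p : ℝ} (hp : 0 < p) (a : ℝ) (z : ℂ) :
    ‖poleRoot p a z‖ ^ p = ‖(a : ℂ) - z‖⁻¹ := by
  rw [poleRoot, Complex.norm_cpow_real, ← Real.rpow_mul (norm_nonneg _),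
    show -(1 / p) * p = -1 by field_simp, Real.rpow_neg_one]

lemma re_lt_one_of_mem {z : ℂ} (hz : z ∈ unitDisk) : z.re < 1 := by
  rw [unitDisk, mem_ball_zero_iff] at hz
  exact (Complex.re_le_norm z).trans_lt hz

lemma sub_mem_slitPlane {a : ℝ} (ha : 1 ≤ a) {z : ℂ} (hz : z ∈ unitDisk) :
    (a : ℂ) - z ∈ Complex.slitPlane := by
  left
  have := re_lt_one_of_mem hz
  simp only [Complex.sub_re, Complex.ofReal_re]
  linarith

lemma differentiableOn_poleRoot (p : ℝ) {a : ℝ} (ha : 1 ≤ a) :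
    DifferentiableOn ℂ (poleRoot p a) unitDisk := by
  intro z hz
  have h : DifferentiableAt ℂ (fun z : ℂ => (a : ℂ) - z) z := by fun_prop
  exact (h.cpow_const (sub_mem_slitPlane ha hz)).differentiableWithinAt

lemma norm_one_sub_le {a : ℝ} (ha : 1 ≤ a) {z : ℂ} (hz : z ∈ unitDisk) :
    ‖(1 : ℂ) - z‖ ≤ ‖(a : ℂ) - z‖ := by
  have := re_lt_one_of_mem hz
  rw [← sq_le_sq₀ (norm_nonneg _) (norm_nonneg _), ← Complex.normSq_eq_norm_sq,
    ← Complex.normSq_eq_norm_sq, Complex.normSq_apply, Complex.normSq_apply]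
  simp only [Complex.sub_re, Complex.sub_im, Complex.one_re, Complex.one_im, Complex.ofReal_re,
    Complex.ofReal_im]
  nlinarith

lemma memHardy_poleRoot {p : ℝ} (hp : 0 < p) {a : ℝ} (ha : 1 < a) :
    MemHardy p (poleRoot p a) := by
  have hd := differentiableOn_poleRoot p ha.le
  refine ⟨hd, (a - 1)⁻¹, fun r hr hr1 => ?_⟩
  have hπ := Real.pi_pos
  have hle : ∫ θ in (0:ℝ)..(2 * π), ‖poleRoot p a ((r : ℂ) * Complex.exp (θ * Complex.I))‖ ^ p
      ≤ ∫ _θ in (0:ℝ)..(2 * π), (a - 1)⁻¹ := by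
    refine intervalIntegral.integral_mono (by positivity)
      ((continuous_circle hp.le hd hr hr1).intervalIntegrable _ _)
      (continuous_const.intervalIntegrable _ _) fun θ => ?_
    simp only [norm_poleRoot_rpow hp]
    refine inv_anti₀ (by linarith) ?_
    have h := norm_sub_norm_le (a : ℂ) ((r : ℂ) * Complex.exp (θ * Complex.I))
    rw [norm_circle hr, Complex.norm_real, Real.norm_of_nonneg (by linarith)] at h
    linarith
  rw [intervalIntegral.integral_const, smul_eq_mul, sub_zero] at hle
  unfold hardyIntegral
  calc _ ≤ 1 / (2 * π) * (2 * π * (a - 1)⁻¹) := by gcongr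
    _ = _ := by field_simp

/-- Since `|e^{iθ} - 1| ≤ (1 - r) + |1 - re^{iθ}| ≤ 2 |1 - re^{iθ}|`, the distance from the point
`1` is bounded below by a multiple of `|θ|`, uniformly in `r`. -/
lemma abs_div_pi_le {r θ : ℝ} (hr : 0 ≤ r) (hr1 : r < 1) (hθ : |θ| ≤ π) :
    |θ| / π ≤ ‖(1 : ℂ) - (r : ℂ) * Complex.exp (θ * Complex.I)‖ := by
  have hπ := Real.pi_pos
  have h1 : 1 - r ≤ ‖(1 : ℂ) - (r : ℂ) * Complex.exp (θ * Complex.I)‖ := by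
    have h := norm_sub_norm_le (1 : ℂ) ((r : ℂ) * Complex.exp (θ * Complex.I))
    rwa [norm_circle hr, norm_one] at h
  have h2 : ‖Complex.exp (Complex.I * θ) - 1‖
      ≤ (1 - r) + ‖(1 : ℂ) - (r : ℂ) * Complex.exp (θ * Complex.I)‖ := by
    have h := norm_sub_le (((1 - r : ℝ) : ℂ) * Complex.exp (θ * Complex.I))
      (1 - (r : ℂ) * Complex.exp (θ * Complex.I))
    rw [norm_circle (by linarith)] at h
    refine le_of_eq_of_le ?_ h
    congr 1
    push_cast
    rw [mul_comm Complex.I]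
    ring
  rw [Complex.norm_exp_I_mul_ofReal_sub_one, norm_mul, Real.norm_eq_abs, Real.norm_eq_abs,
    abs_two] at h2
  have h3 := Real.mul_abs_le_abs_sin (x := θ / 2) (by rw [abs_div, abs_two]; linarith)
  rw [abs_div, abs_two, show 2 / π * (|θ| / 2) = |θ| / π by field_simp] at h3
  linarith

/-- Splitting `|1 - z|⁻¹ = |1 - z|^{-ε} |1 - z|^{ε - 1}`, the first factor is at most
`(1 - r)^{-ε}` and the second has bounded circular means. -/
lemma exists_mean_poleRoot_le {p : ℝ} (hp : 0 < p) {ε : ℝ} (hε : 0 < ε) (hε1 : ε < 1) :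
    ∃ C : ℝ, ∀ r : ℝ, 0 < r → r < 1 →
      hardyIntegral p (poleRoot p 1) r ≤ C * (1 - r) ^ (-ε) := by
  have hπ := Real.pi_pos
  have hb : IntervalIntegrable (fun θ : ℝ => (|θ| / π) ^ (ε - 1)) volume (-π) π := by
    have hpos : IntervalIntegrable (fun θ : ℝ => (|θ| / π) ^ (ε - 1)) volume 0 π := by
      have h := (intervalIntegral.intervalIntegrable_rpow' (a := 0) (b := π)
        (show -1 < ε - 1 by linarith)).mul_const ((π ^ (ε - 1))⁻¹)
      refine h.congr fun θ hθ => ?_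
      rw [uIoc_of_le hπ.le] at hθ
      rw [abs_of_pos hθ.1, Real.div_rpow hθ.1.le hπ.le, div_eq_mul_inv]
    have hneg : IntervalIntegrable (fun θ : ℝ => (|θ| / π) ^ (ε - 1)) volume (-π) 0 := by
      have h := hpos.comp_sub_left 0
      simp only [zero_sub, abs_neg, neg_zero] at h
      exact h.symm
    exact hneg.trans hpos
  refine ⟨1 / (2 * π) * ∫ θ in (-π)..π, (|θ| / π) ^ (ε - 1), fun r hr hr1 => ?_⟩
  have hd := differentiableOn_poleRoot p (le_refl (1 : ℝ))
  have hr1' : 0 < 1 - r := by linarith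
  have key : 2 * π * hardyIntegral p (poleRoot p 1) r
      ≤ (∫ θ in (-π)..π, (|θ| / π) ^ (ε - 1)) * (1 - r) ^ (-ε) := by
    rw [two_pi_mul_hardyIntegral, ← intervalIntegral.integral_mul_const]
    refine intervalIntegral.integral_mono_ae_restrict (by linarith)
      ((continuous_circle hp.le hd hr.le hr1).intervalIntegrable _ _) (hb.mul_const _) ?_
    -- At `θ = 0` the majorant takes the junk value `0 ^ (ε - 1) = 0`, so this point is discarded.
    filter_upwards [ae_restrict_mem measurableSet_Icc,
      ae_restrict_of_ae (Measure.ae_ne volume (0 : ℝ))] with θ hθ hθ0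
    rw [norm_poleRoot_rpow hp, Complex.ofReal_one]
    set w := ‖(1 : ℂ) - (r : ℂ) * Complex.exp (θ * Complex.I)‖ with hw
    have h1 : 1 - r ≤ w := by
      have h := norm_sub_norm_le (1 : ℂ) ((r : ℂ) * Complex.exp (θ * Complex.I))
      rwa [norm_circle hr.le, norm_one] at h
    have hw0 : 0 < w := hr1'.trans_le h1
    have hpos : 0 < |θ| / π := div_pos (abs_pos.2 hθ0) hπ
    have h2 : |θ| / π ≤ w := abs_div_pi_le hr.le hr1 (abs_le.2 hθ)
    calc w⁻¹ = w ^ (ε - 1) * w ^ (-ε) := by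
          rw [← Real.rpow_add hw0, show ε - 1 + -ε = -1 by ring, Real.rpow_neg_one]
      _ ≤ (|θ| / π) ^ (ε - 1) * (1 - r) ^ (-ε) := by
          refine mul_le_mul ?_ ?_ (by positivity) (by positivity)
          · exact Real.rpow_le_rpow_of_nonpos hpos h2 (by linarith)
          · exact Real.rpow_le_rpow_of_nonpos hr1' h1 (by linarith)
  calc hardyIntegral p (poleRoot p 1) r
      = 1 / (2 * π) * (2 * π * hardyIntegral p (poleRoot p 1) r) := by field_simp
    _ ≤ 1 / (2 * π) * ((∫ θ in (-π)..π, (|θ| / π) ^ (ε - 1)) * (1 - r) ^ (-ε)) := by gcongr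
    _ = _ := by ring

lemma memBergman_poleRoot_one {p α : ℝ} (hp : 0 < p) (hα : -1 < α) :
    MemBergman p α (poleRoot p 1) := by
  have hm : 0 < min (α + 1) 1 := lt_min (by linarith) one_pos
  obtain ⟨C, hC⟩ := exists_mean_poleRoot_le hp (ε := min (α + 1) 1 / 2) (by linarith)
    (by linarith [min_le_right (α + 1) 1])
  exact memBergman_of_mean_le hp.le (differentiableOn_poleRoot p le_rfl)
    (by linarith [min_le_left (α + 1) 1]) hC

/-- On the circle of radius `1 - δ` the mean of `|1 - z|⁻¹` is at least `(2π)⁻¹ log (1 / δ)`,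
because `|1 - z| ≤ δ + θ` there. -/
lemma log_le_mean_poleRoot {p : ℝ} (hp : 0 < p) {δ : ℝ} (hδ : 0 < δ) (hδ1 : δ < 1) :
    -Real.log δ ≤ 2 * π * hardyIntegral p (poleRoot p 1) (1 - δ) := by
  have hπ := Real.pi_pos
  have hπ3 := Real.pi_gt_three
  have hd := differentiableOn_poleRoot p (le_refl (1 : ℝ))
  have hc := continuous_circle hp.le hd (r := 1 - δ) (by linarith) (by linarith)
  have hci : IntervalIntegrable (fun θ : ℝ => (θ + δ)⁻¹) volume 0 1 := by
    refine ContinuousOn.intervalIntegrable (ContinuousOn.inv₀ (by fun_prop) fun θ hθ => ?_)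
    rw [uIcc_of_le zero_le_one] at hθ
    linarith [hθ.1]
  calc -Real.log δ ≤ Real.log ((1 + δ) / (0 + δ)) := by
        rw [zero_add, Real.log_div (by linarith) hδ.ne']
        linarith [Real.log_nonneg (show 1 ≤ 1 + δ by linarith)]
    _ = ∫ θ in (0:ℝ)..1, (θ + δ)⁻¹ := by
        rw [intervalIntegral.integral_comp_add_right (fun x : ℝ => x⁻¹),
          integral_inv_of_pos (by linarith) (by linarith)]
    _ ≤ ∫ θ in (0:ℝ)..1,
          ‖poleRoot p 1 (((1 - δ : ℝ) : ℂ) * Complex.exp (θ * Complex.I))‖ ^ p := by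
        refine intervalIntegral.integral_mono_on zero_le_one hci (hc.intervalIntegrable _ _)
          fun θ hθ => ?_
        have hz := circle_mem_unitDisk (r := 1 - δ) (by linarith) (by linarith) θ
        rw [norm_poleRoot_rpow hp]
        refine inv_anti₀ (norm_pos_iff.2
          (Complex.slitPlane_ne_zero (sub_mem_slitPlane le_rfl hz))) ?_
        have h1 : ‖Complex.exp (Complex.I * θ) - 1‖ ≤ θ := by
          have h := Real.norm_exp_I_mul_ofReal_sub_one_le (x := θ)
          rwa [Real.norm_of_nonneg hθ.1] at h
        have h2 := norm_sub_le ((δ : ℝ) : ℂ)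
          (((1 - δ : ℝ) : ℂ) * (Complex.exp (Complex.I * θ) - 1))
        rw [norm_mul, Complex.norm_real, Complex.norm_real, Real.norm_of_nonneg hδ.le,
          Real.norm_of_nonneg (show 0 ≤ 1 - δ by linarith)] at h2
        calc _ = ‖((δ : ℝ) : ℂ) - ((1 - δ : ℝ) : ℂ) * (Complex.exp (Complex.I * θ) - 1)‖ := by
              congr 1
              push_cast
              rw [mul_comm Complex.I]
              ring
          _ ≤ θ + δ := by nlinarith [norm_nonneg (Complex.exp (Complex.I * θ) - 1)]
    _ ≤ ∫ θ in (0:ℝ)..(2 * π),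
          ‖poleRoot p 1 (((1 - δ : ℝ) : ℂ) * Complex.exp (θ * Complex.I))‖ ^ p := by
        refine intervalIntegral.integral_mono_interval le_rfl zero_le_one (by linarith)
          (Eventually.of_forall fun θ => ?_) (hc.intervalIntegrable _ _)
        simp only [Pi.zero_apply]
        positivity
    _ = _ := by
        rw [hardyIntegral, ← mul_assoc, mul_one_div_cancel (by positivity), one_mul]

lemma not_memHardy_poleRoot_one {p : ℝ} (hp : 0 < p) : ¬ MemHardy p (poleRoot p 1) := by
  rintro ⟨-, C, hC⟩
  have hπ := Real.pi_pos
  have hK : 0 ≤ 2 * π * |C| := by positivity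
  have hδ1 : Real.exp (-(2 * π * |C| + 1)) < 1 := Real.exp_lt_one_iff.2 (by linarith)
  have h1 := log_le_mean_poleRoot hp (Real.exp_pos (-(2 * π * |C| + 1))) hδ1
  have h2 := hC (1 - Real.exp (-(2 * π * |C| + 1))) (by linarith)
    (by linarith [Real.exp_pos (-(2 * π * |C| + 1))])
  rw [Real.log_exp] at h1
  have h3 := mul_le_mul_of_nonneg_left (h2.trans (le_abs_self C)) (show 0 ≤ 2 * π by positivity)
  linarith

/-- Dominated convergence: `|1 + 1/(n+1) - z| ≥ |1 - z|` on the disk, so the integrand is at most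
`2^{p+1}` times the one of `(1 - z)^{-1/p}`. -/
lemma tendsto_bergmanNorm_poleRoot {p α : ℝ} (hp : 0 < p) (hα : -1 < α) :
    Tendsto (fun n : ℕ => bergmanNorm p α (poleRoot p (1 + 1 / ((n : ℝ) + 1)) - poleRoot p 1))
      atTop (𝓝 0) := by
  have ha : ∀ n : ℕ, 1 ≤ 1 + 1 / ((n : ℝ) + 1) := fun n => by
    have : 0 < 1 / ((n : ℝ) + 1) := by positivity
    linarith
  have hlim : Tendsto (fun n : ℕ => ∫ z in unitDisk,
      bergmanIntegrand p α (poleRoot p (1 + 1 / ((n : ℝ) + 1)) - poleRoot p 1) z)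
      atTop (𝓝 (∫ _z in unitDisk, (0 : ℝ))) := by
    refine tendsto_integral_of_dominated_convergence
      (fun z => 2 ^ p * 2 * bergmanIntegrand p α (poleRoot p 1) z) (fun n => ?_)
      ((memBergman_poleRoot_one hp hα).2.const_mul _) (fun n => ?_) ?_
    · exact (continuousOn_bergmanIntegrand hp.le α ((differentiableOn_poleRoot p (ha n)).sub
        (differentiableOn_poleRoot p le_rfl))).aestronglyMeasurable measurableSet_unitDisk
    · filter_upwards [ae_restrict_mem measurableSet_unitDisk] with z hz
      rw [Real.norm_of_nonneg (bergmanIntegrand_nonneg _ _ _ hz)]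
      have hw := Real.rpow_nonneg (one_sub_sq_pos hz).le α
      have h1 := norm_add_rpow_le hp.le (poleRoot p (1 + 1 / ((n : ℝ) + 1)) z) (-poleRoot p 1 z)
      have h2 : ‖poleRoot p (1 + 1 / ((n : ℝ) + 1)) z‖ ^ p ≤ ‖poleRoot p 1 z‖ ^ p := by
        rw [norm_poleRoot_rpow hp, norm_poleRoot_rpow hp]
        refine inv_anti₀ (norm_pos_iff.2
          (Complex.slitPlane_ne_zero (sub_mem_slitPlane le_rfl hz))) ?_
        rw [Complex.ofReal_one]
        exact norm_one_sub_le (ha n) hz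
      rw [norm_neg, ← sub_eq_add_neg] at h1
      have h3 : (0 : ℝ) ≤ 2 ^ p := by positivity
      unfold bergmanIntegrand
      rw [← mul_assoc, Pi.sub_apply]
      refine mul_le_mul_of_nonneg_right ?_ hw
      nlinarith
    · filter_upwards [ae_restrict_mem measurableSet_unitDisk] with z hz
      have hcont : ContinuousAt (fun a : ℝ => poleRoot p a z) 1 :=
        ContinuousAt.cpow (by fun_prop) continuousAt_const (sub_mem_slitPlane le_rfl hz)
      have hseq : Tendsto (fun n : ℕ => 1 + 1 / ((n : ℝ) + 1)) atTop (𝓝 1) := by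
        simpa using tendsto_one_div_add_atTop_nhds_zero_nat.const_add (1 : ℝ)
      have h1 := (((hcont.tendsto.comp hseq).sub_const (poleRoot p 1 z)).norm.rpow_const
        (Or.inr hp.le)).mul_const ((1 - ‖z‖ ^ 2) ^ α)
      rw [sub_self, norm_zero, Real.zero_rpow hp.ne', zero_mul] at h1
      exact h1
  rw [integral_zero] at hlim
  have h := (hlim.const_mul ((α + 1) / π)).rpow_const (p := 1 / p) (Or.inr (by positivity))
  rw [mul_zero, Real.zero_rpow (by positivity)] at h
  exact h

/-- The Hardy space `H^p(𝔻)` is a linear subspace of the Bergman space `A^p_α(𝔻)`,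
but it is not a closed subset of `A^p_α(𝔻)` in the Bergman norm. -/
theorem hardy_linear_subspace_bergman_not_closed
    (p α : ℝ) (hp : 1 ≤ p) (hα : -1 < α) :
    (∀ f : ℂ → ℂ, MemHardy p f → MemBergman p α f) ∧
    MemHardy p (fun _ => (0:ℂ)) ∧
    (∀ f g : ℂ → ℂ, MemHardy p f → MemHardy p g → MemHardy p (f + g)) ∧
    (∀ (c : ℂ) (f : ℂ → ℂ), MemHardy p f → MemHardy p (c • f)) ∧
    (∃ (F : ℕ → ℂ → ℂ) (g : ℂ → ℂ), (∀ n, MemHardy p (F n)) ∧ MemBergman p α g ∧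
      Filter.Tendsto (fun n => bergmanNorm p α (F n - g)) Filter.atTop (nhds 0) ∧
      ¬ MemHardy p g) := by
  have hp0 : 0 < p := by linarith
  refine ⟨?_, ?_, ?_, ?_, ?_⟩
  · rintro f ⟨hf, C, hC⟩
    refine memBergman_of_mean_le hp0.le hf (C := C) (ε := 0) (by linarith) fun r hr hr1 => ?_
    rw [neg_zero, Real.rpow_zero, mul_one]
    exact hC r hr.le hr1
  · refine ⟨differentiableOn_const _, 0, fun r _ _ => ?_⟩
    simp [hardyIntegral, Real.zero_rpow hp0.ne']
  · rintro f g ⟨hf, C, hC⟩ ⟨hg, D, hD⟩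
    refine ⟨hf.add hg, 2 ^ p * (C + D), fun r hr hr1 => ?_⟩
    refine (hardyIntegral_add_le hp0.le hf hg hr hr1).trans ?_
    exact mul_le_mul_of_nonneg_left (add_le_add (hC r hr hr1) (hD r hr hr1)) (by positivity)
  · rintro c f ⟨hf, C, hC⟩
    refine ⟨hf.const_smul c, ‖c‖ ^ p * C, fun r hr hr1 => ?_⟩
    rw [hardyIntegral_smul]
    exact mul_le_mul_of_nonneg_left (hC r hr hr1) (by positivity)
  · refine ⟨fun n => poleRoot p (1 + 1 / ((n : ℝ) + 1)), poleRoot p 1, fun n => ?_,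
      memBergman_poleRoot_one hp0 hα, tendsto_bergmanNorm_poleRoot hp0 hα,
      not_memHardy_poleRoot_one hp0⟩
    have : 0 < 1 / ((n : ℝ) + 1) := by positivity
    exact memHardy_poleRoot hp0 (by linarith)
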